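/- Let n ≥ 2 and m = 2, and let S₂ = {w ∈ ℂ^{n+1} \ {0} : w real, w₃ = ⋯ = w_n = 0, and ⟨w,w⟩ = 0}. Then the set Ω̃ = {z ∈ ℂ^{n+1} \ {0} : ⟨z,w⟩ ≠ 0 for every w ∈ S₂} is open in ℂ^{n+1} and has exactly three connected components (in the subspace topology). -/

import Mathlib

open scoped ComplexConjugate

noncomputable def herm (n : ℕ) (z w : Fin (n + 1) → ℂ) : ℂ :=
  (∑ j : Fin n, z j.castSucc * conj (w j.castSucc)) - z (Fin.last n) * conj (w (Fin.last n))

def conjVec (n : ℕ) (z : Fin (n + 1) → ℂ) : Fin (n + 1) → ℂ := fun j => conj (z j)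

noncomputable def fdet (n : ℕ) (z : Fin (n + 1) → ℂ) : ℝ :=
  Complex.normSq (herm n z (conjVec n z)) - ((herm n z z).re) ^ 2

def IsRealVec (n : ℕ) (z : Fin (n + 1) → ℂ) : Prop := conjVec n z = z

def Scone (n : ℕ) : Set (Fin (n + 1) → ℂ) :=
  {w | w ≠ 0 ∧ IsRealVec n w ∧ herm n w w = 0}

def LambdaCone (n : ℕ) : Set (Fin (n + 1) → ℂ) :=
  {z | z ≠ 0 ∧ ∃ w ∈ Scone n, herm n z w = 0}

/-- The cone over the real `(m−1)`-sphere `∂H_ℝᵐ ⊂ ℙ_ℂⁿ`. -/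
def SmCone (m n : ℕ) : Set (Fin (n + 1) → ℂ) :=
  {w | w ≠ 0 ∧ IsRealVec n w ∧
    (∀ j : Fin (n + 1), m ≤ (j : ℕ) → (j : ℕ) < n → w j = 0) ∧ herm n w w = 0}

lemma card_components_three {X : Type*} [TopologicalSpace X] (U : Fin 3 → Set X)
    (ho : ∀ i, IsOpen (U i)) (hp : ∀ i, IsPreconnected (U i)) (hne : ∀ i, (U i).Nonempty)
    (hd : ∀ i j x, x ∈ U i → x ∈ U j → i = j) (hc : ∀ x, ∃ i, x ∈ U i) :
    Nat.card (ConnectedComponents X) = 3 := by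
  choose f hf using hc
  have hpre : ∀ i, f ⁻¹' {i} = U i := by
    intro i
    ext x
    constructor
    · rintro rfl
      exact hf x
    · intro hx
      exact hd _ _ x (hf x) hx
  have hcont : Continuous f := by
    rw [continuous_discrete_rng]
    intro b
    rw [hpre b]
    exact ho b
  have hbij : Function.Bijective hcont.connectedComponentsLift := by
    constructor
    · intro a b
      obtain ⟨x, rfl⟩ := ConnectedComponents.surjective_coe a
      obtain ⟨y, rfl⟩ := ConnectedComponents.surjective_coe b
      intro h
      simp only [Continuous.connectedComponentsLift_apply_coe] at h
      rw [ConnectedComponents.coe_eq_coe']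
      exact (hp (f y)).subset_connectedComponent (hf y) (h ▸ hf x)
    · intro i
      obtain ⟨x, hx⟩ := hne i
      refine ⟨(x : ConnectedComponents X), ?_⟩
      simp only [Continuous.connectedComponentsLift_apply_coe]
      exact hd _ _ x (hf x) hx
  rw [Nat.card_eq_of_bijective _ hbij]
  simp

section pieces
variable {ι : Type*} (i j l : ι)

/-- `z_l` avoids the ellipse spanned by `z_i, z_j`. -/
def PP (z : ι → ℂ) : Prop :=
  ∀ X Y : ℝ, X ^ 2 + Y ^ 2 = 1 → (X : ℂ) * z i + (Y : ℂ) * z j ≠ z l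

/-- Convex cone. -/
def CC : Set (ι → ℂ) := {z | ‖(⟨(z i).re, (z j).re⟩ : ℂ)‖ < (z l).re}

/-- The outer piece. -/
def W0 : Set (ι → ℂ) := {z | ∃ g : ℂ, g ≠ 0 ∧ g • z ∈ CC i j l}

/-- The inner pieces (`s = ±1`). -/
def W1 (s : ℝ) : Set (ι → ℂ) := {z | 0 < s * (conj (z i) * z j).im ∧
  (conj (z l) * z j).im ^ 2 + (conj (z i) * z l).im ^ 2 < (conj (z i) * z j).im ^ 2}

lemma CC_iff (z : ι → ℂ) : z ∈ CC i j l ↔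
    0 < (z l).re ∧ (z i).re ^ 2 + (z j).re ^ 2 < (z l).re ^ 2 := by
  have h1 : ‖(⟨(z i).re, (z j).re⟩ : ℂ)‖ ^ 2 = (z i).re ^ 2 + (z j).re ^ 2 := by
    rw [Complex.sq_norm, Complex.normSq_mk]; ring
  have h0 := norm_nonneg (⟨(z i).re, (z j).re⟩ : ℂ)
  unfold CC
  simp only [Set.mem_ofPred_eq]
  rw [← h1]
  constructor
  · intro h
    exact ⟨by linarith, by nlinarith⟩
  · rintro ⟨h2, h3⟩
    exact lt_of_pow_lt_pow_left₀ 2 h2.le h3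

lemma CC_convex : Convex ℝ (CC i j l) := by
  intro x hx y hy a b ha hb hab
  unfold CC at *
  simp only [Set.mem_ofPred_eq] at *
  have e : (⟨((a • x + b • y) i).re, ((a • x + b • y) j).re⟩ : ℂ)
      = a • (⟨(x i).re, (x j).re⟩ : ℂ) + b • (⟨(y i).re, (y j).re⟩ : ℂ) := by
    apply Complex.ext <;> simp
  rw [e]
  refine lt_of_le_of_lt (norm_add_le _ _) ?_
  rw [norm_smul, norm_smul, Real.norm_of_nonneg ha, Real.norm_of_nonneg hb]
  have e2 : ((a • x + b • y) l).re = a * (x l).re + b * (y l).re := by simp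
  rw [e2]
  rcases ha.eq_or_lt with h | h
  · have : b = 1 := by linarith
    subst h; subst this; simpa using hy
  · have := mul_lt_mul_of_pos_left hx h
    have := mul_le_mul_of_nonneg_left hy.le hb
    linarith

lemma CC_open : IsOpen (CC i j l) := by
  have : CC i j l = {z | 0 < (z l).re} ∩ {z | (z i).re ^ 2 + (z j).re ^ 2 < (z l).re ^ 2} := by
    ext z; exact CC_iff i j l z
  rw [this]
  exact (isOpen_lt (by fun_prop) (by fun_prop)).inter (isOpen_lt (by fun_prop) (by fun_prop))

lemma W0_open : IsOpen (W0 i j l) := by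
  have : W0 i j l = ⋃ g : {g : ℂ // g ≠ 0}, (fun z : ι → ℂ => (g : ℂ) • z) ⁻¹' CC i j l := by
    ext z; simp [W0]
  rw [this]
  exact isOpen_iUnion fun g => (CC_open i j l).preimage (by fun_prop)

lemma W1_open (s : ℝ) : IsOpen (W1 i j l s) := by
  have h1 : Continuous fun z : ι → ℂ => conj (z i) * z j := by fun_prop
  have h2 : Continuous fun z : ι → ℂ => conj (z l) * z j := by fun_prop
  have h3 : Continuous fun z : ι → ℂ => conj (z i) * z l := by fun_prop
  have i1 := Complex.continuous_im.comp h1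
  have i2 := Complex.continuous_im.comp h2
  have i3 := Complex.continuous_im.comp h3
  exact (isOpen_lt continuous_const (continuous_const.mul i1)).inter
    (isOpen_lt ((i2.pow 2).add (i3.pow 2)) (i1.pow 2))

lemma punctured_preconn : IsPreconnected ({0}ᶜ : Set ℂ) :=
  (isConnected_compl_singleton_of_one_lt_rank (by simp) 0).isPreconnected

lemma W0_preconn : IsPreconnected (W0 i j l) := by
  have : W0 i j l = (fun p : ℂ × (ι → ℂ) => p.1 • p.2) '' (({0}ᶜ : Set ℂ) ×ˢ CC i j l) := by
    ext z
    constructor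
    · rintro ⟨g, hg, h⟩
      exact ⟨(g⁻¹, g • z), ⟨by simpa using hg, h⟩, by simp [smul_smul, hg]⟩
    · rintro ⟨⟨g, y⟩, ⟨hg, hy⟩, rfl⟩
      have hg : g ≠ 0 := hg
      exact ⟨g⁻¹, inv_ne_zero hg, by simpa [smul_smul, hg] using hy⟩
  rw [this]
  exact (punctured_preconn.prod (CC_convex i j l).isPreconnected).image _
    (by fun_prop)

variable {i j l} in
lemma W1_of {z : ι → ℂ} {s x y : ℝ} (h : 0 < s * (conj (z i) * z j).im)
    (hxy : x ^ 2 + y ^ 2 < 1) (hl : z l = x * z i + y * z j) : z ∈ W1 i j l s := by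
  refine ⟨h, ?_⟩
  have hD : (conj (z i) * z j).im ≠ 0 := by
    intro h0; rw [h0] at h; simp at h
  have e1 : (conj (z l) * z j).im = x * (conj (z i) * z j).im := by
    rw [hl]; simp; ring
  have e2 : (conj (z i) * z l).im = y * (conj (z i) * z j).im := by
    rw [hl]; simp; ring
  rw [e1, e2]
  have : 0 < (conj (z i) * z j).im ^ 2 := by positivity
  nlinarith

lemma cramer (a b c : ℂ) (hD : (conj a * b).im ≠ 0) :
    c = (((conj c * b).im / (conj a * b).im : ℝ) : ℂ) * a
      + (((conj a * c).im / (conj a * b).im : ℝ) : ℂ) * b := by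
  have h : (conj a * b).im = a.re * b.im - a.im * b.re := by simp; ring
  have h2 : (conj c * b).im = c.re * b.im - c.im * b.re := by simp; ring
  have h3 : (conj a * c).im = a.re * c.im - a.im * c.re := by simp; ring
  rw [h] at hD
  rw [h, h2, h3]
  apply Complex.ext
  · rw [Complex.add_re, Complex.re_ofReal_mul, Complex.re_ofReal_mul,
      div_mul_eq_mul_div, div_mul_eq_mul_div, ← add_div, eq_div_iff hD]
    ring
  · rw [Complex.add_im, Complex.im_ofReal_mul, Complex.im_ofReal_mul,
      div_mul_eq_mul_div, div_mul_eq_mul_div, ← add_div, eq_div_iff hD]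
    ring

variable {i j l} in
lemma W1_coords {z : ι → ℂ} {s : ℝ} (h : z ∈ W1 i j l s) :
    ∃ x y : ℝ, x ^ 2 + y ^ 2 < 1 ∧ z l = x * z i + y * z j := by
  obtain ⟨h1, h2⟩ := h
  have hD : (conj (z i) * z j).im ≠ 0 := by
    intro h0; rw [h0] at h1; simp at h1
  refine ⟨_, _, ?_, cramer (z i) (z j) (z l) hD⟩
  have : 0 < (conj (z i) * z j).im ^ 2 := by positivity
  rw [div_pow, div_pow, ← add_div, div_lt_one this]
  exact h2

lemma W1_preconn [DecidableEq ι] (hij : i ≠ j) (hil : i ≠ l) (hjl : j ≠ l) (s : ℝ) :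
    IsPreconnected (W1 i j l s) := by
  let T : Set (ℂ × ℂ × ℂ × (ι → ℂ)) :=
    ({0}ᶜ : Set ℂ) ×ˢ ({t : ℂ | 0 < s * t.im} ×ˢ (Metric.ball (0 : ℂ) 1 ×ˢ Set.univ))
  let F : ℂ × ℂ × ℂ × (ι → ℂ) → (ι → ℂ) := fun p =>
    Function.update (Function.update (Function.update p.2.2.2 i p.1) j (p.1 * p.2.1)) l
      ((p.2.2.1.re : ℂ) * p.1 + (p.2.2.1.im : ℂ) * (p.1 * p.2.1))
  have hF : Continuous F := by
    refine Continuous.update (Continuous.update (Continuous.update ?_ _ ?_) _ ?_) _ ?_ <;> fun_prop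
  have hT : IsPreconnected T := by
    refine punctured_preconn.prod (IsPreconnected.prod ?_ (IsPreconnected.prod ?_ ?_))
    · refine Convex.isPreconnected ?_
      intro x hx y hy a b ha hb hab
      simp only [Set.mem_ofPred_eq] at *
      have e : s * (a • x + b • y).im = a * (s * x.im) + b * (s * y.im) := by
        simp; ring
      rw [e]
      rcases ha.eq_or_lt with h | h
      · have : b = 1 := by linarith
        subst h; subst this; simpa using hy
      · have := mul_pos h hx
        have := mul_nonneg hb hy.le
        linarith
    · exact (convex_ball (0 : ℂ) 1).isPreconnected
    · exact isPreconnected_univ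
  have : W1 i j l s = F '' T := by
    ext z
    constructor
    · intro hz
      obtain ⟨x, y, hxy, hl⟩ := W1_coords hz
      have hi : z i ≠ 0 := by
        intro h0
        have := hz.1
        rw [h0] at this
        simp at this
      refine ⟨(z i, z j / z i, ⟨x, y⟩, z), ⟨hi, ?_, ?_, trivial⟩, ?_⟩
      · have e : conj (z i) * z j = (Complex.normSq (z i) : ℂ) * (z j / z i) := by
          rw [Complex.normSq_eq_conj_mul_self]; field_simp
        have h1 := hz.1
        rw [e, Complex.im_ofReal_mul] at h1
        have h2 := Complex.normSq_pos.2 hi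
        simp only [Set.mem_ofPred_eq]
        by_contra h3
        push Not at h3
        nlinarith
      · simp only [mem_ball_zero_iff]
        have : ‖(⟨x, y⟩ : ℂ)‖ ^ 2 < 1 ^ 2 := by
          rw [Complex.sq_norm, Complex.normSq_mk]; nlinarith
        exact lt_of_pow_lt_pow_left₀ 2 (by norm_num) this
      · have e : z i * (z j / z i) = z j := by field_simp
        simp only [F, e]
        rw [← hl]
        simp
    · rintro ⟨⟨a, t, q, y⟩, ⟨ha, ht, hq, -⟩, rfl⟩
      have ha : a ≠ 0 := ha
      have ht : 0 < s * t.im := ht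
      have hq : ‖q‖ < 1 := by simpa using hq
      have e0 : F (a, t, q, y) i = a := by simp [F, hij, hil]
      have e1 : F (a, t, q, y) j = a * t := by simp [F, hjl]
      have e2 : F (a, t, q, y) l = q.re * a + q.im * (a * t) := by simp [F]
      apply W1_of (x := q.re) (y := q.im)
      · rw [e0, e1]
        have e : conj a * (a * t) = (Complex.normSq a : ℂ) * t := by
          rw [Complex.normSq_eq_conj_mul_self]; ring
        rw [e, Complex.im_ofReal_mul]
        have := mul_pos (Complex.normSq_pos.2 ha) ht
        linarith
      · have := Complex.sq_norm q
        rw [Complex.normSq_apply] at this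
        nlinarith [norm_nonneg q]
      · rw [e0, e1, e2]
  rw [this]
  exact hT.image _ hF.continuousOn

lemma cs (x y A B : ℝ) : (x * A + y * B) ^ 2 ≤ (x ^ 2 + y ^ 2) * (A ^ 2 + B ^ 2) := by
  nlinarith [sq_nonneg (x * B - y * A)]

variable {i j l} in
lemma W0_coords {z : ι → ℂ} (h : z ∈ W0 i j l) (x y : ℝ) (hxy : x ^ 2 + y ^ 2 ≤ 1)
    (hl : z l = x * z i + y * z j) : False := by
  obtain ⟨g, hg, h⟩ := h
  rw [CC_iff] at h
  obtain ⟨h1, h2⟩ := h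
  have e : ((g • z) l).re = x * ((g • z) i).re + y * ((g • z) j).re := by
    simp [hl]; ring
  rw [e] at h2
  have := cs x y ((g • z) i).re ((g • z) j).re
  nlinarith [sq_nonneg ((g • z) i).re, sq_nonneg ((g • z) j).re]

lemma W0_sub {z : ι → ℂ} (h : z ∈ W0 i j l) : PP i j l z :=
  fun X Y hXY he => W0_coords h X Y hXY.le he.symm

lemma W1_sub {s : ℝ} {z : ι → ℂ} (h : z ∈ W1 i j l s) : PP i j l z := by
  intro X Y hXY he
  obtain ⟨h1, h2⟩ := h
  have e1 : (conj (z l) * z j).im = X * (conj (z i) * z j).im := by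
    rw [← he]; simp; ring
  have e2 : (conj (z i) * z l).im = Y * (conj (z i) * z j).im := by
    rw [← he]; simp; ring
  rw [e1, e2] at h2
  nlinarith

lemma circle_solve (s t k : ℝ) (h : k ^ 2 ≤ s ^ 2 + t ^ 2) :
    ∃ X Y : ℝ, X ^ 2 + Y ^ 2 = 1 ∧ X * s + Y * t = k := by
  rcases (by positivity : 0 ≤ s ^ 2 + t ^ 2).eq_or_lt with h0 | h0
  · have hs : s = 0 := by nlinarith [sq_nonneg s, sq_nonneg t]
    have ht : t = 0 := by nlinarith [sq_nonneg s, sq_nonneg t]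
    have hk : k = 0 := by nlinarith [sq_nonneg k]
    exact ⟨1, 0, by norm_num, by simp [hs, hk]⟩
  · have hh := Real.sq_sqrt (sub_nonneg.2 h)
    set r := Real.sqrt (s ^ 2 + t ^ 2 - k ^ 2)
    refine ⟨(k * s - t * r) / (s ^ 2 + t ^ 2), (k * t + s * r) / (s ^ 2 + t ^ 2), ?_, ?_⟩
    · rw [div_pow, div_pow, ← add_div, div_eq_one_iff_eq (by positivity)]
      linear_combination (s ^ 2 + t ^ 2) * hh
    · field_simp
      ring

lemma real_line (a b : ℂ) (hD : (conj a * b).im = 0) :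
    ∃ (e : ℂ) (s t : ℝ), e ≠ 0 ∧ a = s * e ∧ b = t * e := by
  by_cases ha : a = 0
  · by_cases hb : b = 0
    · exact ⟨1, 0, 0, one_ne_zero, by simp [ha], by simp [hb]⟩
    · exact ⟨b, 0, 1, hb, by simp [ha], by simp⟩
  · refine ⟨a, 1, (conj a * b).re / Complex.normSq a, ha, by simp, ?_⟩
    have h1 : conj a * b = ((conj a * b).re : ℂ) := by
      exact Complex.ext (by simp) (by rw [hD, Complex.ofReal_im])
    have h2 : conj a ≠ 0 := by simpa using ha
    rw [Complex.ofReal_div, ← h1, Complex.normSq_eq_conj_mul_self]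
    field_simp

lemma cover {z : ι → ℂ} (h : PP i j l z) :
    z ∈ W0 i j l ∨ z ∈ W1 i j l 1 ∨ z ∈ W1 i j l (-1) := by
  by_cases hD : (conj (z i) * z j).im = 0
  · left
    obtain ⟨e, s, t, he, hs, ht⟩ := real_line _ _ hD
    have hl : z l = (z l / e) * e := by field_simp
    set q := z l / e with hq
    by_cases hm : q.im = 0
    · have hk : s ^ 2 + t ^ 2 < q.re ^ 2 := by
        by_contra hk
        push Not at hk
        obtain ⟨X, Y, h1, h2⟩ := circle_solve s t q.re hk
        apply h X Y h1
        have : q = (q.re : ℂ) := by apply Complex.ext <;> simp [hm]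
        rw [hl, this, ← h2, hs, ht]
        push_cast
        ring
      have hq0 : q.re ≠ 0 := by
        intro h0; rw [h0] at hk; nlinarith [sq_nonneg s, sq_nonneg t]
      refine ⟨(q.re : ℂ) * e⁻¹, by simp [he, hq0], ?_⟩
      rw [CC_iff]
      simp only [Pi.smul_apply, smul_eq_mul]
      have e1 : (q.re : ℂ) * e⁻¹ * z i = (q.re * s : ℝ) := by
        rw [hs]; push_cast; field_simp
      have e2 : (q.re : ℂ) * e⁻¹ * z j = (q.re * t : ℝ) := by
        rw [ht]; push_cast; field_simp
      have e3 : (q.re : ℂ) * e⁻¹ * z l = (q.re : ℂ) * q := by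
        rw [hl]; field_simp
      rw [e1, e2, e3, Complex.ofReal_re, Complex.ofReal_re, Complex.re_ofReal_mul]
      have : 0 < q.re ^ 2 := by positivity
      constructor
      · nlinarith
      · nlinarith
    · refine ⟨(-q.im * Complex.I : ℂ) * e⁻¹, by simp [he, hm], ?_⟩
      rw [CC_iff]
      simp only [Pi.smul_apply, smul_eq_mul]
      have e1 : (-q.im * Complex.I : ℂ) * e⁻¹ * z i = (-q.im * s : ℝ) * Complex.I := by
        rw [hs]; push_cast; field_simp
      have e2 : (-q.im * Complex.I : ℂ) * e⁻¹ * z j = (-q.im * t : ℝ) * Complex.I := by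
        rw [ht]; push_cast; field_simp
      have e3 : (-q.im * Complex.I : ℂ) * e⁻¹ * z l = (-q.im * Complex.I : ℂ) * q := by
        rw [hl]; field_simp
      have e4 : ((-q.im * Complex.I : ℂ) * q).re = q.im ^ 2 := by
        simp; ring
      rw [e1, e2, e3, e4, Complex.re_ofReal_mul, Complex.re_ofReal_mul]
      have : 0 < q.im ^ 2 := by positivity
      simp only [Complex.I_re, mul_zero]
      exact ⟨this, by nlinarith⟩
  · have hc := cramer (z i) (z j) (z l) hD
    set x := (conj (z l) * z j).im / (conj (z i) * z j).im
    set y := (conj (z i) * z l).im / (conj (z i) * z j).im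
    rcases lt_trichotomy (x ^ 2 + y ^ 2) 1 with h1 | h1 | h1
    · right
      rcases lt_or_gt_of_ne hD with h2 | h2
      · right
        exact W1_of (by linarith) h1 hc
      · left
        exact W1_of (by linarith) h1 hc
    · exact absurd hc.symm (h x y h1)
    · left
      have hD' : (conj (z i) * z j).im = (z i).re * (z j).im - (z i).im * (z j).re := by
        simp; ring
      set D := (conj (z i) * z j).im
      let g : ℂ := ⟨(x * (z j).im - y * (z i).im) / D, (x * (z j).re - y * (z i).re) / D⟩
      have e1 : (g * z i).re = x := by
        simp only [g, Complex.mul_re]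
        field_simp
        rw [hD']; ring
      have e2 : (g * z j).re = y := by
        simp only [g, Complex.mul_re]
        field_simp
        rw [hD']; ring
      have e3 : (g * z l).re = x ^ 2 + y ^ 2 := by
        have : g * z l = x * (g * z i) + y * (g * z j) := by
          rw [hc]; ring
        rw [this, Complex.add_re, Complex.re_ofReal_mul, Complex.re_ofReal_mul, e1, e2]
        ring
      refine ⟨g, ?_, ?_⟩
      · intro h0
        rw [h0] at e3
        simp at e3
        linarith
      · rw [CC_iff]
        simp only [Pi.smul_apply, smul_eq_mul]
        rw [e1, e2, e3]
        exact ⟨by linarith, by nlinarith⟩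

lemma PP_three [DecidableEq ι] (hij : i ≠ j) (hil : i ≠ l) (hjl : j ≠ l) :
    IsOpen {z : ι → ℂ | PP i j l z} ∧
    Nat.card (ConnectedComponents ↥{z : ι → ℂ | PP i j l z}) = 3 := by
  have hu : {z : ι → ℂ | PP i j l z} = W0 i j l ∪ (W1 i j l 1 ∪ W1 i j l (-1)) := by
    ext z
    constructor
    · exact fun h => cover i j l h
    · rintro (h | h | h)
      · exact W0_sub i j l h
      · exact W1_sub i j l h
      · exact W1_sub i j l h
  constructor
  · rw [hu]
    exact (W0_open i j l).union ((W1_open i j l 1).union (W1_open i j l (-1)))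
  · let V : Fin 3 → Set (ι → ℂ) := ![W0 i j l, W1 i j l 1, W1 i j l (-1)]
    have hV : ∀ a, V a ⊆ {z : ι → ℂ | PP i j l z} := by
      intro a
      fin_cases a
      · exact fun z h => W0_sub i j l h
      · exact fun z h => W1_sub i j l h
      · exact fun z h => W1_sub i j l h
    have h01 : ∀ s z, z ∈ W0 i j l → z ∈ W1 i j l s → False := by
      intro s z h h'
      obtain ⟨x, y, hxy, hl⟩ := W1_coords h'
      exact W0_coords h x y hxy.le hl
    have h11 : ∀ z, z ∈ W1 i j l 1 → z ∈ W1 i j l (-1) → False := by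
      intro z h h'
      have := h.1
      have := h'.1
      linarith
    refine card_components_three (fun a => Subtype.val ⁻¹' V a) ?_ ?_ ?_ ?_ ?_
    · intro a
      refine IsOpen.preimage continuous_subtype_val ?_
      fin_cases a
      · exact W0_open i j l
      · exact W1_open i j l 1
      · exact W1_open i j l (-1)
    · intro a
      rw [← Topology.IsInducing.subtypeVal.isPreconnected_image, Subtype.image_preimage_coe,
        Set.inter_eq_right.2 (hV a)]
      fin_cases a
      · exact W0_preconn i j l
      · exact W1_preconn i j l hij hil hjl 1
      · exact W1_preconn i j l hij hil hjl (-1)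
    · intro a
      suffices h : (V a).Nonempty by
        obtain ⟨z, hz⟩ := h
        exact ⟨⟨z, hV a hz⟩, hz⟩
      fin_cases a
      · refine ⟨Pi.single l 1, 1, one_ne_zero, ?_⟩
        rw [CC_iff]
        simp [hil, hjl]
      · refine ⟨Pi.single i 1 + Pi.single j Complex.I, ?_⟩
        refine W1_of (x := 0) (y := 0) ?_ (by norm_num) ?_
        · simp [hij, hij.symm]
        · simp [hil.symm, hjl.symm]
      · refine ⟨Pi.single i 1 + Pi.single j (-Complex.I), ?_⟩
        refine W1_of (x := 0) (y := 0) ?_ (by norm_num) ?_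
        · simp [hij, hij.symm]
        · simp [hil.symm, hjl.symm]
    · rintro a b ⟨z, hz⟩ ha hb
      have ha : z ∈ V a := ha
      have hb : z ∈ V b := hb
      fin_cases a <;> fin_cases b
      · rfl
      · exact (h01 _ z ha hb).elim
      · exact (h01 _ z ha hb).elim
      · exact (h01 _ z hb ha).elim
      · rfl
      · exact (h11 z ha hb).elim
      · exact (h01 _ z hb ha).elim
      · exact (h11 z hb ha).elim
      · rfl
    · rintro ⟨z, hz⟩
      rcases cover i j l hz with h | h | h
      · exact ⟨0, h⟩
      · exact ⟨1, h⟩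
      · exact ⟨2, h⟩

end pieces

lemma herm_three (k : ℕ) (z w : Fin (k + 2 + 1) → ℂ)
    (hw : ∀ j : Fin (k + 2 + 1), 2 ≤ (j : ℕ) → (j : ℕ) < k + 2 → w j = 0) :
    herm (k + 2) z w = z 0 * conj (w 0) + z 1 * conj (w 1)
      - z (Fin.last (k + 2)) * conj (w (Fin.last (k + 2))) := by
  unfold herm
  rw [Fin.sum_univ_succ, Fin.sum_univ_succ]
  rw [Finset.sum_eq_zero]
  · simp
  · intro x _
    rw [hw]
    · simp
    · simp
    · simp

lemma omega_eq (k : ℕ) :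
    {z : Fin (k + 2 + 1) → ℂ | z ≠ 0 ∧ ∀ w ∈ SmCone 2 (k + 2), herm (k + 2) z w ≠ 0}
      = {z | PP 0 1 (Fin.last (k + 2)) z} := by
  have n0 : (0 : Fin (k + 2 + 1)) ≠ Fin.last (k + 2) := by
    intro h; simpa using congrArg Fin.val h
  have n1 : (1 : Fin (k + 2 + 1)) ≠ Fin.last (k + 2) := by
    intro h; simpa using congrArg Fin.val h
  ext z
  constructor
  · rintro ⟨-, h⟩ X Y hXY he
    let w : Fin (k + 2 + 1) → ℂ :=
      Pi.single 0 (X : ℂ) + Pi.single 1 (Y : ℂ) + Pi.single (Fin.last (k + 2)) 1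
    have w0 : w 0 = X := by simp [w, n0]
    have w1 : w 1 = Y := by simp [w, n1]
    have w2 : w (Fin.last (k + 2)) = 1 := by simp [w, n0.symm, n1.symm]
    have hw : ∀ j : Fin (k + 2 + 1), 2 ≤ (j : ℕ) → (j : ℕ) < k + 2 → w j = 0 := by
      intro j h2 h3
      have a0 : j ≠ 0 := by rintro rfl; simp at h2
      have a1 : j ≠ 1 := by rintro rfl; simp at h2
      have a2 : j ≠ Fin.last (k + 2) := by rintro rfl; simp at h3
      simp [w, a0, a1, a2]
    refine h w ⟨?_, ?_, hw, ?_⟩ ?_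
    · intro h0; rw [h0] at w2; simp at w2
    · funext j
      simp only [conjVec]
      by_cases a0 : j = 0
      · rw [a0, w0]; simp
      by_cases a1 : j = 1
      · rw [a1, w1]; simp
      by_cases a2 : j = Fin.last (k + 2)
      · rw [a2, w2]; simp
      simp [w, a0, a1, a2]
    · rw [herm_three k w w hw, w0, w1, w2]
      have : (X : ℂ) ^ 2 + (Y : ℂ) ^ 2 = 1 := by exact_mod_cast hXY
      simp
      linear_combination this
    · rw [herm_three k z w hw, w0, w1, w2, ← he]
      simp
      ring
  · intro h
    refine ⟨?_, ?_⟩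
    · rintro rfl
      exact h 1 0 (by norm_num) (by simp)
    · rintro w ⟨hw0, hr, hw, hn⟩ hz
      rw [herm_three k _ _ hw] at hn hz
      have hc : ∀ j, conj (w j) = w j := fun j => congrFun hr j
      have hre : ∀ j, w j = ((w j).re : ℂ) := fun j => (Complex.conj_eq_iff_re.1 (hc j)).symm
      simp only [hc] at hn hz
      rw [hre 0, hre 1, hre (Fin.last (k + 2))] at hn hz
      have hn' : (w 0).re * (w 0).re + (w 1).re * (w 1).re
        - (w (Fin.last (k + 2))).re * (w (Fin.last (k + 2))).re = 0 := by exact_mod_cast hn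
      set r := (w (Fin.last (k + 2))).re with hrr
      have hr0 : r ≠ 0 := by
        intro h0
        apply hw0
        rw [h0] at hn'
        have b0 : (w 0).re = 0 := by nlinarith
        have b1 : (w 1).re = 0 := by nlinarith
        funext j
        by_cases a0 : j = 0
        · rw [a0, hre 0, b0]; simp
        by_cases a1 : j = 1
        · rw [a1, hre 1, b1]; simp
        by_cases a2 : j = Fin.last (k + 2)
        · rw [a2, hre, ← hrr, h0]; simp
        refine hw j ?_ ?_
        · by_contra hlt
          have : (j : ℕ) = 0 ∨ (j : ℕ) = 1 := by omega
          rcases this with h | h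
          · exact a0 (Fin.ext (by simpa using h))
          · exact a1 (Fin.ext (by simpa using h))
        · have : (j : ℕ) ≠ k + 2 := fun h => a2 (Fin.ext (by simpa using h))
          have := j.isLt
          omega
      refine h ((w 0).re / r) ((w 1).re / r) ?_ ?_
      · field_simp
        linarith
      · have : (r : ℂ) ≠ 0 := by exact_mod_cast hr0
        push_cast
        field_simp
        linear_combination hz

/-- (Theorem 3 / `teo:tres` i, cone version): for `m = 2` the cone over the Kulkarni
discontinuity region is open and has exactly three connected components. -/
theorem omegaCone_three_components (n : ℕ) (hn : 2 ≤ n) :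
    IsOpen {z : Fin (n + 1) → ℂ | z ≠ 0 ∧ ∀ w ∈ SmCone 2 n, herm n z w ≠ 0} ∧
    Nat.card (ConnectedComponents
      ↥{z : Fin (n + 1) → ℂ | z ≠ 0 ∧ ∀ w ∈ SmCone 2 n, herm n z w ≠ 0}) = 3 := by
  obtain ⟨k, rfl⟩ : ∃ k, n = k + 2 := ⟨n - 2, by omega⟩
  rw [omega_eq k]
  refine PP_three _ _ _ ?_ ?_ ?_
  · intro h; simpa using congrArg Fin.val h
  · intro h; simpa using congrArg Fin.val h
  · intro h; simpa using congrArg Fin.val h
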